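/- For every n ≥ 1, the composition δ^n ∘ D^n : A → C^{n+1}(G,A) equals −D^{n+1} if n is odd and equals 0 if n is even; that is, for all a ∈ A and g_1,…,g_{n+1} ∈ G, (δ^n(D^n a))(g_1,…,g_{n+1}) = −[D^{n+1}a](g_1,…,g_{n+1}) when n is odd and (δ^n(D^n a))(g_1,…,g_{n+1}) = 0 when n is even. -/

import Mathlib

/-- The iterated difference operator `D^n` associated with a right `G`-action
`act : A → G → A` on an additive abelian group `A`. -/
def iterD {A G : Type*} [AddCommGroup A] [Group G] (act : A → G → A) :
    (n : ℕ) → A → (Fin n → G) → A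
  | 0, a, _ => a
  | n + 1, a, g =>
      act (iterD act n a (fun i => g i.castSucc)) (g (Fin.last n))
        - iterD act n a (fun i => g i.castSucc)

/-- The coboundary operator `δⁿ : Cⁿ(G,A) → C^{n+1}(G,A)` for the trivial left
`G`-action on `A`. -/
def coboundary {G A : Type*} [Group G] [AddCommGroup A] (n : ℕ)
    (c : (Fin n → G) → A) : (Fin (n + 1) → G) → A := fun g =>
  c (fun i => g i.succ)
    + (∑ i : Fin n, ((-1 : ℤ) ^ ((i : ℕ) + 1)) •
        c (fun j => if (j : ℕ) < (i : ℕ) then g j.castSucc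
            else if j = i then g i.castSucc * g i.succ
            else g j.succ))
    + ((-1 : ℤ) ^ (n + 1)) • c (fun i => g i.castSucc)

/-! Informally, `D^n a (g₁, …, gₙ) = a (g₁ - 1) ⋯ (gₙ - 1)`, so the group ring identity
`gh - 1 = (g - 1)(h - 1) + (g - 1) + (h - 1)` shows that multiplying two adjacent entries `gᵢ`,
`gᵢ₊₁` of a tuple gives `D^{n+1} a` at the full tuple plus the two values of `D^n a` at the tuple
with one of these entries deleted. In the alternating sum defining `δ^n` the deleted-entry terms
telescope against the two outer terms, leaving `n` copies of `D^{n+1} a` with alternating signs. -/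

section Tuples

variable {α : Type*} {n : ℕ}

theorem removeNth_castSucc_snoc (i : Fin (n + 1)) (g : Fin (n + 1) → α) (x : α) :
    i.castSucc.removeNth (Fin.snoc g x : Fin (n + 2) → α) = Fin.snoc (i.removeNth g) x := by
  funext j
  cases j using Fin.lastCases with
  | last => simp [Fin.removeNth_apply, (Fin.castSucc_lt_last i).ne]
  | cast j => simp [Fin.removeNth_apply]

theorem contractNth_castSucc_castSucc_snoc (i : Fin n) (op : α → α → α)
    (g : Fin (n + 1) → α) (x : α) :
    i.castSucc.castSucc.contractNth op (Fin.snoc g x : Fin (n + 2) → α) =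
      Fin.snoc (i.castSucc.contractNth op g) x := by
  funext j
  cases j using Fin.lastCases with
  | last =>
    rw [Fin.contractNth_apply_of_gt _ _ _ _ (by simp)]
    simp
  | cast j => simp [Fin.contractNth, Fin.succ_castSucc, -Fin.castSucc_succ]

theorem contractNth_castSucc_last_snoc_snoc (op : α → α → α) (g : Fin n → α) (x y : α) :
    (Fin.last n).castSucc.contractNth op
      (Fin.snoc (Fin.snoc g x : Fin (n + 1) → α) y : Fin (n + 2) → α) = Fin.snoc g (op x y) := by
  funext j
  cases j using Fin.lastCases with
  | last => simp [Fin.contractNth]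
  | cast j => simp [Fin.contractNth]

end Tuples

theorem sum_neg_one_pow_smul_add {A : Type*} [AddCommGroup A] {n : ℕ} (f : Fin (n + 1) → A) :
    ∑ i : Fin n, (-1 : ℤ) ^ (i : ℕ) • (f i.castSucc + f i.succ) =
      f 0 - (-1 : ℤ) ^ n • f (Fin.last n) := by
  let signed (i : Fin (n + 1)) : A := (-1 : ℤ) ^ (i : ℕ) • f i
  calc
    ∑ i : Fin n, (-1 : ℤ) ^ (i : ℕ) • (f i.castSucc + f i.succ)
      = ∑ i : Fin n, (signed i.castSucc - signed i.succ) := by simp [signed, pow_succ]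
    _ = signed 0 - signed (Fin.last n) := by
      rw [Finset.sum_sub_distrib, sub_eq_sub_iff_add_eq_add, ← Fin.sum_univ_castSucc,
        ← Fin.sum_univ_succ]
    _ = f 0 - (-1 : ℤ) ^ n • f (Fin.last n) := by simp [signed]

section Coboundary

variable {A G : Type*} [AddCommGroup A] [Group G] {n : ℕ}

theorem coboundary_apply (c : (Fin n → G) → A) (g : Fin (n + 1) → G) :
    coboundary n c g = c ((0 : Fin (n + 1)).removeNth g)
      - ∑ i : Fin n, (-1 : ℤ) ^ (i : ℕ) • c (i.castSucc.contractNth (· * ·) g)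
      - (-1 : ℤ) ^ n • c ((Fin.last n).removeNth g) := by
  have contract (i : Fin n) : i.castSucc.contractNth (· * ·) g =
      fun j : Fin n ↦ if (j : ℕ) < (i : ℕ) then g j.castSucc
        else if j = i then g i.castSucc * g i.succ else g j.succ := by
    funext j
    grind [Fin.contractNth]
  simp only [coboundary, contract, Fin.removeNth_zero, Fin.removeNth_last, pow_succ, mul_neg_one,
    neg_smul, Finset.sum_neg_distrib, ← sub_eq_add_neg]
  rfl

theorem coboundary_eq_neg_sum_contractNth_sub (c : (Fin n → G) → A) (g : Fin (n + 1) → G) :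
    coboundary n c g = -∑ i : Fin n, (-1 : ℤ) ^ (i : ℕ) •
      (c (i.castSucc.contractNth (· * ·) g)
        - (c (i.castSucc.removeNth g) + c (i.succ.removeNth g))) := by
  simp only [coboundary_apply, smul_sub, Finset.sum_sub_distrib,
    sum_neg_one_pow_smul_add fun k ↦ c (k.removeNth g)]
  abel

end Coboundary

section IterD

variable {A G : Type*} [AddCommGroup A] [Group G] {act : A → G → A}

theorem iterD_snoc (n : ℕ) (a : A) (g : Fin n → G) (x : G) :
    iterD act (n + 1) a (Fin.snoc g x) = act (iterD act n a g) x - iterD act n a g := by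
  simp [iterD]

theorem iterD_contractNth (hadd : ∀ (a b : A) (g : G), act (a + b) g = act a g + act b g)
    (hcomp : ∀ (a : A) (g h : G), act (act a g) h = act a (g * h)) (a : A) {n : ℕ}
    (g : Fin (n + 1) → G) (i : Fin n) :
    iterD act n a (i.castSucc.contractNth (· * ·) g) = iterD act (n + 1) a g
      + (iterD act n a (i.castSucc.removeNth g) + iterD act n a (i.succ.removeNth g)) := by
  induction n with
  | zero => exact i.elim0
  | succ n ih =>
    cases g using Fin.snocCases with | snoc g y =>
    cases i using Fin.lastCases with
    | last =>
      cases g using Fin.snocCases with | snoc g x =>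
      have act_sub (b c : A) : act (b - c) y = act b y - act c y :=
        map_sub (AddMonoidHom.mk' (act · y) (hadd · · y)) b c
      rw [contractNth_castSucc_last_snoc_snoc, removeNth_castSucc_snoc, Fin.succ_last,
        Fin.removeNth_last, Fin.removeNth_last, Fin.init_snoc, Fin.init_snoc]
      simp only [iterD_snoc, act_sub, hcomp]
      abel
    | cast i =>
      rw [contractNth_castSucc_castSucc_snoc, removeNth_castSucc_snoc, Fin.succ_castSucc,
        removeNth_castSucc_snoc]
      simp only [iterD_snoc, ih, hadd]
      abel

end IterD

/-- For every `n ≥ 1`, `δⁿ ∘ Dⁿ = −D^{n+1}` if `n` is odd and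
`δⁿ ∘ Dⁿ = 0` if `n` is even. -/
theorem stmt_11 {A G : Type*} [AddCommGroup A] [Group G] (act : A → G → A)
    (hadd : ∀ (a b : A) (g : G), act (a + b) g = act a g + act b g)
    (hone : ∀ a : A, act a 1 = a)
    (hcomp : ∀ (a : A) (g h : G), act (act a g) h = act a (g * h))
    (n : ℕ) (hn : 1 ≤ n) (a : A) (g : Fin (n + 1) → G) :
    (Odd n → coboundary n (iterD act n a) g = - iterD act (n + 1) a g) ∧
      (Even n → coboundary n (iterD act n a) g = 0) := by
  have coboundary_eq : coboundary n (iterD act n a) g =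
      -((if Even n then 0 else 1 : ℤ) • iterD act (n + 1) a g) := by
    rw [coboundary_eq_neg_sum_contractNth_sub, ← Fin.sum_neg_one_pow, Finset.sum_smul]
    simp only [iterD_contractNth hadd hcomp, add_sub_cancel_right]
  constructor
  · intro odd
    simp [coboundary_eq, Nat.not_even_iff_odd.mpr odd]
  · intro even
    simp [coboundary_eq, even]
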